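/- Let $T$ be a bounded linear operator on a complex Banach space $B$ and $(f_j)_{j\in\mathbb Z}$ a bilateral sequence of elements of $B$ such that $\operatorname{span}\{f_j : j\in\mathbb Z\}$ is dense in $B$ and $Tf_j=f_{j+1}$ for every $j\in\mathbb Z$. A vector $x\in B$ is called cyclic for $T$ if $\operatorname{span}\{T^m x : m\ge 0\}$ is dense in $B$. Consider the following condition. (A) For all positive integers $n,k$ with $n>k$ and every $\varepsilon>0$ there exist a complex polynomial $r$ and $u\in B$ such that $\|f_{-k}-u\|\le\varepsilon$ and $\|f_{-n}-r(T)u\|\le\varepsilon$. If the set of cyclic vectors for $T$ is dense in $B$, then (A) holds. If, moreover, the point spectrum $\sigma_p(T^*)$ (the set of eigenvalues of the dual operator $T^*:B^*\to B^*$, $T^*\varphi=\varphi\circ T$) has empty interior in $\mathbb C$, then conversely (A) implies density; that is, the set of cyclic vectors for $T$ is dense in $B$ if and only if (A) holds. -/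

import Mathlib

/-- `x` is a *cyclic vector* for `T`: `span {T^n x : n ≥ 0}` is dense. -/
def CyclicVector {X : Type*} [NormedAddCommGroup X] [NormedSpace ℂ X]
    (T : X →L[ℂ] X) (x : X) : Prop :=
  Dense (↑(Submodule.span ℂ (Set.range fun n : ℕ => (T ^ n) x)) : Set X)

/-- The dual operator `T* : X* → X*`, `T* φ = φ ∘ T`, on the space of continuous linear
functionals. -/
noncomputable def dualOperator {X : Type*} [NormedAddCommGroup X] [NormedSpace ℂ X]
    (T : X →L[ℂ] X) : (X →L[ℂ] ℂ) →L[ℂ] (X →L[ℂ] ℂ) :=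
  ContinuousLinearMap.precomp ℂ T

/-- The point spectrum of an operator: the set of its eigenvalues. -/
def pointSpectrum {X : Type*} [NormedAddCommGroup X] [NormedSpace ℂ X]
    (T : X →L[ℂ] X) : Set ℂ :=
  {μ : ℂ | Module.End.HasEigenvalue (T : X →ₗ[ℂ] X) μ}

/-- For all positive integers `n > k` and every `ε > 0` there are a polynomial `r` and a vector
`u` with `‖f_{-k} - u‖ ≤ ε` and `‖f_{-n} - r(T) u‖ ≤ ε`. -/
def BackwardApproximable {X : Type*} [NormedAddCommGroup X] [NormedSpace ℂ X]
    (T : X →L[ℂ] X) (f : ℤ → X) : Prop :=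
  ∀ n k : ℕ, 1 ≤ k → k < n → ∀ ε > (0 : ℝ), ∃ (r : Polynomial ℂ) (u : X),
    ‖f (-(k : ℤ)) - u‖ ≤ ε ∧ ‖f (-(n : ℤ)) - (Polynomial.aeval T r) u‖ ≤ ε

/-!
The crux is that the family `r(T)`, `r` a polynomial, is topologically transitive; the Baire
category theorem then gives a dense set of vectors with dense polynomial orbit. Given open sets `U`
and `V`, choose `p(T) f₋ₖ ∈ U`. If the eigenvalues of `T*` have empty interior, moving the roots and
the leading coefficient of `p` slightly yields `q` with `q(T) f₋ₖ ∈ U` and `q(T)` of dense range. So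
there is `s(T) f₋ₙ` with `n > k` which `q(T)` maps into `V`. If `v` is close to `f₋ₖ` and `r(T) v`
is close to `f₋ₙ`, then `q(T) v ∈ U`, and `(s r)(T)` maps it to `q(T) s(T) r(T) v ∈ V`.
-/

open Polynomial TopologicalSpace Filter

section Transitive

variable {ι X Y : Type*} [TopologicalSpace X] [TopologicalSpace Y]

/-- Topological transitivity of a family of maps `A i : X → Y`: some map of the family sends a point
of `U` into `V`, for all nonempty open sets `U` and `V`. For the powers of one self-map this is the
usual topological transitivity of a dynamical system. -/
def TopologicallyTransitive (A : ι → X → Y) : Prop :=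
  ∀ ⦃U : Set X⦄ ⦃V : Set Y⦄, IsOpen U → U.Nonempty → IsOpen V → V.Nonempty →
    ∃ i, ∃ x ∈ U, A i x ∈ V

theorem TopologicallyTransitive.dense_setOf_denseRange [BaireSpace X] [SecondCountableTopology Y]
    {A : ι → X → Y} (hA : TopologicallyTransitive A) (hcont : ∀ i, Continuous (A i)) :
    Dense {x | DenseRange fun i => A i x} := by
  have hdense : Dense (⋂ V ∈ countableBasis Y, ⋃ i, A i ⁻¹' V) := by
    refine dense_biInter_of_isOpen
      (fun V hV => isOpen_iUnion fun i => (isOpen_of_mem_countableBasis hV).preimage (hcont i))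
      (countable_countableBasis Y) fun V hV => dense_iff_inter_open.2 fun U hU hUne => ?_
    obtain ⟨i, x, hxU, hxV⟩ :=
      hA hU hUne (isOpen_of_mem_countableBasis hV) (nonempty_of_mem_countableBasis hV)
    exact ⟨x, hxU, Set.mem_iUnion.2 ⟨i, hxV⟩⟩
  refine hdense.mono fun x hx => (isBasis_countableBasis Y).dense_iff.2 fun V hV _ => ?_
  obtain ⟨i, hi⟩ := Set.mem_iUnion.1 (Set.mem_iInter₂.1 hx V hV)
  exact ⟨A i x, hi, i, rfl⟩

end Transitive

theorem secondCountableTopology_of_dense_span {ι E : Type*} [Countable ι] (𝕜 : Type*)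
    [NormedField 𝕜] [SeparableSpace 𝕜] [SeminormedAddCommGroup E] [NormedSpace 𝕜 E] {f : ι → E}
    (hf : Dense (Submodule.span 𝕜 (Set.range f) : Set E)) : SecondCountableTopology E := by
  have hspan : IsSeparable (Submodule.span 𝕜 (Set.range f) : Set E) :=
    (Set.countable_range f).isSeparable.span
  have : SeparableSpace E := isSeparable_univ_iff.1 (hf.closure_eq ▸ hspan.closure)
  exact UniformSpace.secondCountable_of_separable E

theorem iterate_apply_of_shift {α : Type*} {T : α → α} {f : ℤ → α}
    (hshift : ∀ j, T (f j) = f (j + 1)) (n : ℕ) (j : ℤ) : T^[n] (f j) = f (j + n) := by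
  have hsemiconj : Function.Semiconj f (· + 1) T := fun j => (hshift j).symm
  simpa using (hsemiconj.iterate_right n j).symm

section Orbit

variable {R M : Type*} [CommRing R] [AddCommGroup M] [Module R M] [TopologicalSpace M]
  [IsTopologicalAddGroup M] [ContinuousConstSMul R M]

theorem coe_span_range_pow_apply (T : M →L[R] M) (x : M) :
    (Submodule.span R (Set.range fun n : ℕ => (T ^ n) x) : Set M) =
      Set.range fun r : R[X] => aeval T r x := by
  let evalAt : R[X] →ₗ[R] M :=
    { toFun := fun r => aeval T r x
      map_add' := fun r s => by simp
      map_smul' := fun a r => by simp }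
  have horbit : (fun n : ℕ => (T ^ n) x) = evalAt ∘ basisMonomials R := by
    ext n
    simp [evalAt, aeval_monomial]
  rw [horbit, Set.range_comp, ← Submodule.map_span, (basisMonomials R).span_eq, Submodule.map_top,
    LinearMap.coe_range]
  rfl

variable {T : M →L[R] M} {f : ℤ → M}

theorem eventually_exists_aeval_eq_of_mem_span (hshift : ∀ j, T (f j) = f (j + 1)) {x : M}
    (hx : x ∈ Submodule.span R (Set.range f)) :
    ∀ᶠ k : ℕ in atTop, ∃ p : R[X], aeval T p (f (-k)) = x := by
  induction hx using Submodule.span_induction with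
  | mem x hx =>
    obtain ⟨j, rfl⟩ := hx
    filter_upwards [eventually_ge_atTop j.natAbs] with k hk
    refine ⟨X ^ (j + k).toNat, ?_⟩
    rw [map_pow, aeval_X, pow_apply_eq_iterate, iterate_apply_of_shift hshift]
    congr 1
    omega
  | zero => exact .of_forall fun k => ⟨0, by simp⟩
  | add x y _ _ hx hy =>
    filter_upwards [hx, hy] with k ⟨p, hp⟩ ⟨q, hq⟩
    exact ⟨p + q, by simp [hp, hq]⟩
  | smul a x _ hx =>
    filter_upwards [hx] with k ⟨p, hp⟩
    exact ⟨a • p, by simp [hp]⟩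

end Orbit

theorem cyclicVector_iff_denseRange {E : Type*} [NormedAddCommGroup E] [NormedSpace ℂ E]
    {T : E →L[ℂ] E} {x : E} : CyclicVector T x ↔ DenseRange fun r : ℂ[X] => aeval T r x := by
  rw [CyclicVector, coe_span_range_pow_apply, DenseRange]

theorem denseRange_of_forall_dual_comp_eq_zero {𝕜 E F : Type*} [RCLike 𝕜]
    [TopologicalSpace E] [AddCommGroup E] [Module 𝕜 E] [SeminormedAddCommGroup F] [NormedSpace 𝕜 F]
    (A : E →L[𝕜] F) (hA : ∀ φ : StrongDual 𝕜 F, φ ∘L A = 0 → φ = 0) : DenseRange A := by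
  let p : Submodule 𝕜 F := A.range.topologicalClosure
  have : IsClosed (p : Set F) := Submodule.isClosed_topologicalClosure _
  suffices p = ⊤ from Submodule.dense_iff_topologicalClosure_eq_top.2 this
  refine Submodule.eq_top_iff'.2 fun y => by_contra fun hy => ?_
  obtain ⟨g, hg⟩ := SeparatingDual.exists_ne_zero (R := 𝕜)
    (mt (Submodule.Quotient.mk_eq_zero p).1 hy)
  have hcomp : (g ∘L p.mkQL) ∘L A = 0 := by
    ext x
    have hx : p.mkQL (A x) = 0 :=
      (Submodule.Quotient.mk_eq_zero p).2 (Submodule.le_topologicalClosure _ ⟨x, rfl⟩)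
    simp [hx]
  exact hg (DFunLike.congr_fun (hA _ hcomp) y)

/-- The monoid of continuous linear operators with dense range. Closure under composition reduces
the approximation of `p(T)` by such operators to the linear factors of `p`. -/
def denseRangeSubmonoid (R M : Type*) [Semiring R] [AddCommMonoid M] [Module R M]
    [TopologicalSpace M] : Submonoid (M →L[R] M) where
  carrier := {A | DenseRange A}
  one_mem' := denseRange_id
  mul_mem' {A _} hA hC := hA.comp hC A.continuous

section PointSpectrum

variable {E : Type*} [NormedAddCommGroup E] [NormedSpace ℂ E] {T : E →L[ℂ] E}

theorem denseRange_aeval_X_sub_C_of_notMem_pointSpectrum {μ : ℂ}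
    (hμ : μ ∉ pointSpectrum (dualOperator T)) : DenseRange (aeval T (X - C μ)) := by
  refine denseRange_of_forall_dual_comp_eq_zero _ fun φ hφ => by_contra fun hne => hμ ?_
  refine Module.End.hasEigenvalue_of_hasEigenvector
    ⟨Module.End.mem_eigenspace_iff.2 (sub_eq_zero.1 ?_), hne⟩
  ext x
  simpa [dualOperator, Algebra.algebraMap_eq_smul_one] using DFunLike.congr_fun hφ x

theorem aeval_mem_closure_image_setOf_denseRange
    (hT : interior (pointSpectrum (dualOperator T)) = ∅) (p : ℂ[X]) :
    aeval T p ∈ closure (aeval T '' {q : ℂ[X] | DenseRange (aeval T q)}) := by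
  let S : Submonoid (E →L[ℂ] E) :=
    ((denseRangeSubmonoid ℂ E).comap (aeval (R := ℂ) T)).map (aeval T)
  have hconst (a : ℂ) : aeval T (C a) ∈ S.topologicalClosure := by
    rw [aeval_C]
    refine map_mem_closure (continuous_algebraMap ℂ _) (dense_compl_singleton 0 a) fun b hb =>
      ⟨C b, ?_, aeval_C T b⟩
    refine Function.Surjective.denseRange fun y => ⟨b⁻¹ • y, ?_⟩
    simp [Algebra.algebraMap_eq_smul_one, inv_smul_smul₀ (Set.mem_compl_singleton_iff.1 hb)]
  have hlinear (a : ℂ) : aeval T (X + C a) ∈ S.topologicalClosure := by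
    have hdense : Dense (pointSpectrum (dualOperator T))ᶜ := interior_eq_empty_iff_dense_compl.1 hT
    have hcont : Continuous fun μ : ℂ => aeval T (X - C μ) := by
      simp only [map_sub, aeval_X, aeval_C]
      exact continuous_const.sub (continuous_algebraMap ℂ _)
    rw [← sub_neg_eq_add, ← C_neg]
    exact map_mem_closure (f := fun μ => aeval T (X - C μ)) hcont (hdense (-a)) fun μ hμ =>
      ⟨X - C μ, denseRange_aeval_X_sub_C_of_notMem_pointSpectrum hμ, rfl⟩
  have hle : Submonoid.closure ({C a | a : ℂ} ∪ {X + C a | a : ℂ} : Set ℂ[X]) ≤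
      S.topologicalClosure.comap (aeval T) := by
    rw [Submonoid.closure_le]
    rintro _ (⟨a, rfl⟩ | ⟨a, rfl⟩)
    exacts [hconst a, hlinear a]
  -- `Splits p` unfolds to membership in the submonoid on the left of `hle`.
  exact hle (IsAlgClosed.splits p)

end PointSpectrum

namespace BackwardApproximable

variable {E : Type*} [NormedAddCommGroup E] [NormedSpace ℂ E] {T : E →L[ℂ] E} {f : ℤ → E}

theorem of_dense_cyclicVector (f : ℤ → E) (h : Dense {x | CyclicVector T x}) :
    BackwardApproximable T f := by
  intro n k _ _ ε hε
  obtain ⟨u, hu, hku⟩ := h.exists_dist_lt (f (-k)) hε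
  obtain ⟨r, hr⟩ := (cyclicVector_iff_denseRange.1 hu).exists_dist_lt (f (-n)) hε
  rw [dist_eq_norm] at hku hr
  exact ⟨r, u, hku.le, hr.le⟩

theorem exists_aeval_mem (h : BackwardApproximable T f) {n k : ℕ} (hk : 1 ≤ k) (hkn : k < n)
    {U V : Set E} (hU : U ∈ nhds (f (-k))) (hV : V ∈ nhds (f (-n))) :
    ∃ r : ℂ[X], ∃ u ∈ U, aeval T r u ∈ V := by
  obtain ⟨ε, hε, hεU⟩ := Metric.nhds_basis_closedBall.mem_iff.1 hU
  obtain ⟨δ, hδ, hδV⟩ := Metric.nhds_basis_closedBall.mem_iff.1 hV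
  obtain ⟨r, u, hu, hr⟩ := h n k hk hkn (min ε δ) (lt_min hε hδ)
  exact ⟨r, u, hεU (mem_closedBall_iff_norm'.2 (hu.trans (min_le_left _ _))),
    hδV (mem_closedBall_iff_norm'.2 (hr.trans (min_le_right _ _)))⟩

theorem topologicallyTransitive_aeval (h : BackwardApproximable T f)
    (hdense : Dense (Submodule.span ℂ (Set.range f) : Set E))
    (hshift : ∀ j, T (f j) = f (j + 1)) (hT : interior (pointSpectrum (dualOperator T)) = ∅) :
    TopologicallyTransitive fun r : ℂ[X] => ⇑(aeval T r) := by
  intro U V hU hUne hV hVne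
  obtain ⟨x, hxU, hx⟩ := hdense.inter_open_nonempty U hU hUne
  obtain ⟨k, ⟨p, rfl⟩, hk⟩ :=
    ((eventually_exists_aeval_eq_of_mem_span hshift hx).and (eventually_ge_atTop 1)).exists
  obtain ⟨_, hqU, q, hq, rfl⟩ := mem_closure_iff.1 (aeval_mem_closure_image_setOf_denseRange hT p)
    {A | A (f (-k)) ∈ U} (hU.preimage (ContinuousLinearMap.apply ℂ E (f (-k))).continuous) hxU
  obtain ⟨_, hwV, w, hw, rfl⟩ :=
    (hq.dense_image (aeval T q).continuous hdense).inter_open_nonempty V hV hVne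
  obtain ⟨n, ⟨s, rfl⟩, hkn⟩ :=
    ((eventually_exists_aeval_eq_of_mem_span hshift hw).and (eventually_gt_atTop k)).exists
  obtain ⟨r, v, hvU, hvV⟩ := h.exists_aeval_mem hk hkn
    ((hU.preimage (aeval T q).continuous).mem_nhds hqU)
    (((hV.preimage (aeval T q).continuous).preimage (aeval T s).continuous).mem_nhds hwV)
  have hcomm : aeval T (s * r) (aeval T q v) = aeval T q (aeval T s (aeval T r v)) := by
    simp only [← mul_apply_eq_comp, ← map_mul]
    congr 2
    ring
  exact ⟨s * r, aeval T q v, hvU, hcomm.symm.subst hvV⟩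

theorem dense_cyclicVector [BaireSpace E] (h : BackwardApproximable T f)
    (hdense : Dense (Submodule.span ℂ (Set.range f) : Set E))
    (hshift : ∀ j, T (f j) = f (j + 1)) (hT : interior (pointSpectrum (dualOperator T)) = ∅) :
    Dense {x | CyclicVector T x} := by
  have := secondCountableTopology_of_dense_span ℂ hdense
  simp only [cyclicVector_iff_denseRange]
  exact (h.topologicallyTransitive_aeval hdense hshift hT).dense_setOf_denseRange
    fun r => (aeval T r).continuous

end BackwardApproximable

theorem dense_cyclicVectors_iff_of_shifted_sequence_general
    {B : Type*} [NormedAddCommGroup B] [NormedSpace ℂ B] [BaireSpace B]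
    (T : B →L[ℂ] B) (f : ℤ → B)
    (hdense : Dense (↑(Submodule.span ℂ (Set.range f)) : Set B))
    (hshift : ∀ j : ℤ, T (f j) = f (j + 1)) :
    (Dense {x : B | CyclicVector T x} → BackwardApproximable T f) ∧
      (interior (pointSpectrum (dualOperator T)) = ∅ →
        (Dense {x : B | CyclicVector T x} ↔ BackwardApproximable T f)) :=
  ⟨.of_dense_cyclicVector f, fun hT =>
    ⟨.of_dense_cyclicVector f, fun h => h.dense_cyclicVector hdense hshift hT⟩⟩

/-- Let `(f_j)_{j ∈ ℤ}` have dense span in a Banach space and `T f_j = f_{j+1}`. If the cyclic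
vectors of `T` are dense, then the approximation condition holds; and if the point spectrum of
the dual operator `T*` has empty interior, then the two are equivalent. -/
theorem dense_cyclicVectors_iff_of_shifted_sequence
    {B : Type*} [NormedAddCommGroup B] [NormedSpace ℂ B] [CompleteSpace B]
    (T : B →L[ℂ] B) (f : ℤ → B)
    (hdense : Dense (↑(Submodule.span ℂ (Set.range f)) : Set B))
    (hshift : ∀ j : ℤ, T (f j) = f (j + 1)) :
    (Dense {x : B | CyclicVector T x} → BackwardApproximable T f) ∧
      (interior (pointSpectrum (dualOperator T)) = ∅ →
        (Dense {x : B | CyclicVector T x} ↔ BackwardApproximable T f)) := by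
  exact dense_cyclicVectors_iff_of_shifted_sequence_general T f hdense hshift
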